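/- arXiv:1607.04871 — 5 statements merged into one kernel-verified Lean document; each statement's English description precedes it below -/
import Mathlib

section
/- For every integer n ≥ 2, the (n−1)-dimensional simplex Q_n admits the half-space description Q_n = { x ∈ ℝ^{n−1} : k·x_k − (x_1 + x_2 + ⋯ + x_{k−1}) ≤ 1 for every 1 ≤ k ≤ n−1, and −(x_1 + x_2 + ⋯ + x_{n−1}) ≤ 1 }. -/
open Finset

/-- The vertex `C_j` of the simplex `Q_n ⊂ ℝ^{n-1}`: coordinate `i` (0-based; the
1-based coordinate is `i+1`) equals `1` if `i+1 < n-j`, equals `-(n-j)` if `i+1 = n-j`,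
and equals `0` if `i+1 > n-j`.  For `j = 0` this is the all-ones vector. -/
noncomputable def Cvert (n j : ℕ) : Fin (n - 1) → ℝ := fun i =>
  if (i : ℕ) + 1 < n - j then 1
  else if (i : ℕ) + 1 = n - j then -((n : ℝ) - (j : ℝ))
  else 0

/-- The simplex `Q_n = conv{C_0, C_1, …, C_{n-1}} ⊂ ℝ^{n-1}`. -/
noncomputable def Qpoly (n : ℕ) : Set (Fin (n - 1) → ℝ) :=
  convexHull ℝ {x | ∃ j ≤ n - 1, x = Cvert n j}

/-!
The `n` inequalities pair off with the `n` vertices of `Q_n`: the `k`-th one is strict at `C_{n-k}`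
and an equality at every other vertex, and the last one is strict at `C_0` and an equality at every
other vertex. Hence the vertices are affinely independent, and the slack of each inequality is a
positive multiple of the barycentric coordinate of the vertex at which it is strict. The simplex is
the set where all barycentric coordinates are nonnegative.
-/

section DualFacets

variable {𝕜 E P ι : Type*}

theorem affineIndependent_of_forall_ne_eq [CommRing 𝕜] [IsDomain 𝕜] [AddCommGroup E] [Module 𝕜 E]
    {v : ι → E} {f : ι → Module.Dual 𝕜 E} {b : ι → 𝕜}
    (h_off : ∀ i j, j ≠ i → f i (v j) = b i) (h_diag : ∀ i, f i (v i) ≠ b i) :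
    AffineIndependent 𝕜 v := by
  rw [affineIndependent_iff]
  intro s w hw hwv i hi
  have h_collapse : ∑ j ∈ s, w j * (f i (v j) - b i) = w i * (f i (v i) - b i) :=
    sum_eq_single_of_mem i hi fun j _ hj => by rw [h_off i j hj, sub_self, mul_zero]
  have h_zero : ∑ j ∈ s, w j * (f i (v j) - b i) = 0 := by
    have hf := congrArg (f i) hwv
    simp only [map_sum, map_smul, smul_eq_mul, map_zero] at hf
    simp only [mul_sub, sum_sub_distrib, ← sum_mul, hf, hw, zero_mul, sub_zero]
  exact (mul_eq_zero.1 (h_collapse.symm.trans h_zero)).resolve_right (sub_ne_zero.2 (h_diag i))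

theorem eq_smul_coord_of_forall_ne_eq_zero [CommRing 𝕜] [AddCommGroup E] [Module 𝕜 E]
    [AddTorsor E P] (B : AffineBasis ι 𝕜 P) {i : ι} {g : P →ᵃ[𝕜] 𝕜}
    (hg : ∀ j, j ≠ i → g (B j) = 0) :
    g = g (B i) • B.coord i := by
  refine AffineMap.ext_on B.tot ?_
  rintro _ ⟨j, rfl⟩
  rcases eq_or_ne j i with rfl | hji
  · simp
  · simp [hg j hji, B.coord_apply_ne hji.symm]

theorem convexHull_range_eq_setOf_forall_le [Fintype ι] [Field 𝕜] [LinearOrder 𝕜]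
    [IsStrictOrderedRing 𝕜] [AddCommGroup E] [Module 𝕜 E] [FiniteDimensional 𝕜 E]
    {v : ι → E} {f : ι → Module.Dual 𝕜 E} {b : ι → 𝕜}
    (h_card : Fintype.card ι = Module.finrank 𝕜 E + 1)
    (h_off : ∀ i j, j ≠ i → f i (v j) = b i) (h_diag : ∀ i, f i (v i) < b i) :
    convexHull 𝕜 (Set.range v) = {x | ∀ i, f i x ≤ b i} := by
  have h_indep : AffineIndependent 𝕜 v :=
    affineIndependent_of_forall_ne_eq h_off fun i => (h_diag i).ne
  let B : AffineBasis ι 𝕜 E :=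
    ⟨v, h_indep, h_indep.affineSpan_eq_top_iff_card_eq_finrank_add_one.2 h_card⟩
  have h_slack (i : ι) (x : E) : b i - f i x = (b i - f i (v i)) * B.coord i x :=
    let slack : E →ᵃ[𝕜] 𝕜 := AffineMap.const 𝕜 E (b i) - (f i).toAffineMap
    have h_vanish : ∀ j, j ≠ i → slack (B j) = 0 := fun j hj => sub_eq_zero.2 (h_off i j hj).symm
    DFunLike.congr_fun (eq_smul_coord_of_forall_ne_eq_zero B h_vanish) x
  have h_coord_nonneg (i : ι) (x : E) : 0 ≤ B.coord i x ↔ f i x ≤ b i := by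
    rw [← mul_nonneg_iff_of_pos_left (sub_pos.2 (h_diag i)), ← h_slack, sub_nonneg]
  exact B.convexHull_eq_nonneg_coord.trans (Set.ext fun x => forall_congr' (h_coord_nonneg · x))

end DualFacets

section Simplex

variable (𝕜 : Type*) {d : ℕ}

/-- The vertices of `Q_{d+1}`: `none` gives `C_0`, and `some k` gives `C_{d-k}`, the vertex whose
negative coordinate is the one indexed by `k`. -/
def simplexVertex [Ring 𝕜] : Option (Fin d) → Fin d → 𝕜
  | none => fun _ => 1
  | some k => fun i => if i < k then 1 else if i = k then -((k : 𝕜) + 1) else 0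

/-- The linear form whose bound by `1` defines the facet of `Q_{d+1}` opposite to the
`simplexVertex` with the same index. -/
def facetForm [CommRing 𝕜] : Option (Fin d) → Module.Dual 𝕜 (Fin d → 𝕜)
  | none => -∑ i, LinearMap.proj i
  | some k => ((k : 𝕜) + 1) • LinearMap.proj k - ∑ i ∈ Iio k, LinearMap.proj i

@[simp]
theorem facetForm_none_apply [CommRing 𝕜] (x : Fin d → 𝕜) :
    facetForm 𝕜 none x = -∑ i, x i := by
  simp [facetForm]

@[simp]
theorem facetForm_some_apply [CommRing 𝕜] (k : Fin d) (x : Fin d → 𝕜) :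
    facetForm 𝕜 (some k) x = ((k : 𝕜) + 1) * x k - ∑ i ∈ Iio k, x i := by
  simp [facetForm]

theorem sum_Iio_simplexVertex_some [Ring 𝕜] {k q : Fin d} (hkq : k ≤ q) :
    ∑ i ∈ Iio k, simplexVertex 𝕜 (some q) i = k := by
  have h_one : ∀ i ∈ Iio k, simplexVertex 𝕜 (some q) i = 1 := fun i hi =>
    if_pos ((mem_Iio.1 hi).trans_le hkq)
  simp [sum_congr rfl h_one]

theorem sum_simplexVertex_some_of_Iic_subset [Ring 𝕜] {q : Fin d} {s : Finset (Fin d)}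
    (hs : Iic q ⊆ s) : ∑ i ∈ s, simplexVertex 𝕜 (some q) i = -1 := by
  have h_zero : ∀ i ∈ s, i ∉ Iic q → simplexVertex 𝕜 (some q) i = 0 := fun i _ hi => by
    have hqi : q < i := not_le.1 (mt mem_Iic.2 hi)
    simp [simplexVertex, hqi.not_gt, hqi.ne']
  rw [← sum_subset hs h_zero, ← Iio_insert, sum_insert (by simp),
    sum_Iio_simplexVertex_some 𝕜 le_rfl]
  simp [simplexVertex]

theorem facetForm_simplexVertex_of_ne [CommRing 𝕜] {p q : Option (Fin d)} (hqp : q ≠ p) :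
    facetForm 𝕜 p (simplexVertex 𝕜 q) = 1 := by
  match p, q with
  | none, none => exact absurd rfl hqp
  | none, some q => simp [sum_simplexVertex_some_of_Iic_subset 𝕜 (subset_univ (Iic q))]
  | some k, none => simp [simplexVertex]
  | some k, some q =>
    rw [facetForm_some_apply]
    rcases lt_or_gt_of_ne (Option.some_injective _ |>.ne_iff.1 hqp) with hqk | hkq
    · have h_subset : Iic q ⊆ Iio k := fun i hi =>
        mem_Iio.2 ((mem_Iic.1 hi).trans_lt hqk)
      rw [sum_simplexVertex_some_of_Iic_subset 𝕜 h_subset]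
      simp [simplexVertex, hqk.not_gt, hqk.ne']
    · rw [sum_Iio_simplexVertex_some 𝕜 hkq.le]
      simp [simplexVertex, hkq]

variable [Field 𝕜] [LinearOrder 𝕜] [IsStrictOrderedRing 𝕜]

theorem facetForm_simplexVertex_self_lt_one (p : Option (Fin d)) :
    facetForm 𝕜 p (simplexVertex 𝕜 p) < 1 := by
  cases p with
  | none =>
    simp only [facetForm_none_apply, simplexVertex, sum_const, card_univ, Fintype.card_fin,
      nsmul_eq_mul, mul_one]
    linarith [d.cast_nonneg (α := 𝕜)]
  | some k =>
    rw [facetForm_some_apply, sum_Iio_simplexVertex_some 𝕜 le_rfl]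
    simp only [simplexVertex, lt_irrefl, if_false, if_true]
    nlinarith [Nat.cast_nonneg (α := 𝕜) (k : ℕ)]

theorem convexHull_range_simplexVertex :
    convexHull 𝕜 (Set.range (simplexVertex 𝕜 (d := d))) =
      {x | ∀ p, facetForm 𝕜 p x ≤ 1} :=
  convexHull_range_eq_setOf_forall_le (by simp)
    (fun _ _ => facetForm_simplexVertex_of_ne 𝕜) (facetForm_simplexVertex_self_lt_one 𝕜)

end Simplex

theorem cvert_zero (n : ℕ) : Cvert n 0 = simplexVertex ℝ none := by
  funext i
  exact if_pos (by omega)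

theorem cvert_sub_one_sub (n : ℕ) (k : Fin (n - 1)) :
    Cvert n (n - 1 - k) = simplexVertex ℝ (some k) := by
  funext i
  have h_sub : n - (n - 1 - k) = k + 1 := by omega
  have h_cast : (n : ℝ) - (n - 1 - k : ℕ) = k + 1 := by
    rw [← Nat.cast_sub (by omega), h_sub, Nat.cast_succ]
  simp only [Cvert, simplexVertex, h_sub, h_cast, Nat.add_lt_add_iff_right,
    Nat.add_right_cancel_iff, Fin.lt_def, Fin.ext_iff]

theorem setOf_cvert_eq_range_simplexVertex (n : ℕ) :
    {x | ∃ j ≤ n - 1, x = Cvert n j} = Set.range (simplexVertex ℝ) := by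
  ext x
  simp only [Set.mem_ofPred_eq, Set.mem_range]
  constructor
  · rintro ⟨j, hj, rfl⟩
    rcases j.eq_zero_or_pos with rfl | hj_pos
    · exact ⟨none, (cvert_zero n).symm⟩
    · refine ⟨some ⟨n - 1 - j, by omega⟩, ?_⟩
      rw [← cvert_sub_one_sub, Nat.sub_sub_self hj]
  · rintro ⟨_ | k, rfl⟩
    · exact ⟨0, Nat.zero_le _, (cvert_zero n).symm⟩
    · exact ⟨n - 1 - k, Nat.sub_le _ _, (cvert_sub_one_sub n k).symm⟩

/-- For every integer `n ≥ 2`, the simplex `Q_n` admits the half-space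
description `Q_n = {x ∈ ℝ^{n-1} : k·x_k - (x_1 + ⋯ + x_{k-1}) ≤ 1 for 1 ≤ k ≤ n-1,
and -(x_1 + ⋯ + x_{n-1}) ≤ 1}`.  Here the 1-based coordinate `x_k` corresponds to the
coordinate indexed by `k : Fin (n-1)` (with 1-based value `(k : ℕ) + 1`). -/
theorem stmt_0 (n : ℕ) (hn : 2 ≤ n) :
    Qpoly n = {x : Fin (n - 1) → ℝ |
      (∀ k : Fin (n - 1), (((k : ℕ) + 1 : ℕ) : ℝ) * x k - ∑ i ∈ Finset.Iio k, x i ≤ 1) ∧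
      -∑ i, x i ≤ 1} := by
  rw [Qpoly, setOf_cvert_eq_range_simplexVertex, convexHull_range_simplexVertex]
  ext x
  simp only [Set.mem_ofPred_eq, Option.forall, facetForm_none_apply, facetForm_some_apply,
    Nat.cast_succ, and_comm]
end

section
/- For every integer n ≥ 2, the dual polytope of Q_n equals −Q_n, i.e. Q_n^∨ = { −x : x ∈ Q_n }. -/
open Finset

/-- The dual polytope `P^∨ = {y ∈ ℝ^d : ⟨x, y⟩ ≤ 1 for all x ∈ P}`. -/
def dualPoly {d : ℕ} (P : Set (Fin d → ℝ)) : Set (Fin d → ℝ) :=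
  {y | ∀ x ∈ P, ∑ i, x i * y i ≤ 1}

/-!
The vertices of `Q_n` satisfy `⟨C_j, C_k⟩ = -1` for `j ≠ k`. Any `d + 1` points `v i` of `ℝ^d` with
this property are affinely independent, hence an affine basis, and pairing `x = ∑ a_i v_i`,
`∑ a_i = 1`, with `v i` yields `a_i (1 + ⟨v i, v i⟩) = 1 + ⟨v i, x⟩`. So `-y` has nonnegative
barycentric coordinates exactly when `⟨v i, y⟩ ≤ 1` for all `i`.
-/

section OffDiagonalNegOne

variable {ι 𝕜 E : Type*} [Field 𝕜] [AddCommGroup E] [Module 𝕜 E]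

theorem affineIndependent_of_dual_eq_neg_one {v : ι → E} {f : ι → Module.Dual 𝕜 E}
    (hf : ∀ i j, j ≠ i → f i (v j) = -1) (hf_self : ∀ i, f i (v i) ≠ -1) :
    AffineIndependent 𝕜 v := by
  rw [affineIndependent_iff]
  intro s w hw hwv i hi
  have hprod : w i * (f i (v i) + 1) = 0 := calc
    w i * (f i (v i) + 1) = ∑ j ∈ s, w j * (f i (v j) + 1) := by
      symm
      refine sum_eq_single_of_mem i hi fun j _ hji => ?_
      rw [hf i j hji, neg_add_cancel, mul_zero]
    _ = f i (∑ j ∈ s, w j • v j) + ∑ j ∈ s, w j := by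
      simp only [mul_add_one, sum_add_distrib, map_sum, map_smul, smul_eq_mul]
    _ = 0 := by rw [hwv, hw, map_zero, add_zero]
  exact (mul_eq_zero.mp hprod).resolve_right fun h => hf_self i (eq_neg_of_add_eq_zero_left h)

theorem one_add_mul_coord_eq_one_add (b : AffineBasis ι 𝕜 E) (i : ι) {f : Module.Dual 𝕜 E}
    (hf : ∀ j ≠ i, f (b j) = -1) (x : E) : (1 + f (b i)) * b.coord i x = 1 + f x := by
  have hmaps : (1 + f (b i)) • b.coord i = AffineMap.const 𝕜 E 1 + f.toAffineMap := by
    refine AffineMap.ext_on b.tot ?_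
    rintro _ ⟨j, rfl⟩
    obtain rfl | hji := eq_or_ne j i
    · simp
    · simp [b.coord_apply_ne hji.symm, hf j hji]
  simpa using DFunLike.congr_fun hmaps x

theorem neg_mem_convexHull_range_iff_dual_le_one [LinearOrder 𝕜] [IsStrictOrderedRing 𝕜]
    (b : AffineBasis ι 𝕜 E) {f : ι → Module.Dual 𝕜 E}
    (hf : ∀ i j, j ≠ i → f i (b j) = -1) (hf_self : ∀ i, -1 < f i (b i)) (y : E) :
    -y ∈ convexHull 𝕜 (Set.range b) ↔ ∀ i, f i y ≤ 1 := by
  rw [b.convexHull_eq_nonneg_coord]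
  refine forall_congr' fun i => ?_
  have hpos : 0 < 1 + f i (b i) := by linarith [hf_self i]
  rw [← mul_nonneg_iff_of_pos_left hpos, one_add_mul_coord_eq_one_add b i (hf i), map_neg,
    ← sub_eq_add_neg, sub_nonneg]

end OffDiagonalNegOne

section Dual

variable {d : ℕ}

theorem mem_dualPoly_convexHull_iff {s : Set (Fin d → ℝ)} {y : Fin d → ℝ} :
    y ∈ dualPoly (convexHull ℝ s) ↔ ∀ x ∈ s, x ⬝ᵥ y ≤ 1 := by
  refine ⟨fun hy x hx => hy x (subset_convexHull ℝ s hx), fun hy => ?_⟩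
  have hlin : IsLinearMap ℝ fun x : Fin d → ℝ => x ⬝ᵥ y :=
    ⟨fun x z => add_dotProduct x z y, fun c x => smul_dotProduct c x y⟩
  exact convexHull_min hy (convex_halfSpace_le hlin 1)

theorem dualPoly_convexHull_range_eq_neg {ι : Type*} [Fintype ι] {v : ι → Fin d → ℝ}
    (hcard : Fintype.card ι = d + 1) (hv : ∀ i j, i ≠ j → v i ⬝ᵥ v j = -1) :
    dualPoly (convexHull ℝ (Set.range v)) = -convexHull ℝ (Set.range v) := by
  let f : ι → Module.Dual ℝ (Fin d → ℝ) := fun i => dotProductBilin ℝ ℝ (v i)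
  have hf : ∀ i j, j ≠ i → f i (v j) = -1 := fun i j hji => hv i j hji.symm
  have hf_self : ∀ i, -1 < f i (v i) := fun i =>
    neg_one_lt_zero.trans_le (dotProduct_self_star_nonneg (v i))
  have hind : AffineIndependent ℝ v :=
    affineIndependent_of_dual_eq_neg_one hf fun i => (hf_self i).ne'
  have hspan : affineSpan ℝ (Set.range v) = ⊤ := by
    rw [hind.affineSpan_eq_top_iff_card_eq_finrank_add_one, hcard, Module.finrank_fin_fun]
  ext y
  rw [mem_dualPoly_convexHull_iff, Set.forall_mem_range, Set.mem_neg]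
  exact (neg_mem_convexHull_range_iff_dual_le_one ⟨v, hind, hspan⟩ hf hf_self y).symm

end Dual

section Vertices

variable {n j k : ℕ}

theorem Cvert_mul_Cvert_of_lt (hjk : j < k) (i : Fin (n - 1)) :
    Cvert n j i * Cvert n k i = Cvert n k i := by
  by_cases hi : (i : ℕ) + 1 ≤ n - k
  · have hij : (i : ℕ) + 1 < n - j := by omega
    rw [Cvert, if_pos hij, one_mul]
  · have hzero : Cvert n k i = 0 := by
      rw [Cvert, if_neg (by omega), if_neg (by omega)]
    rw [hzero, mul_zero]

theorem sum_Cvert (hk : 0 < k) (hkn : k < n) : ∑ i, Cvert n k i = -1 := by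
  let partialSum : ℕ → ℝ := fun i => if i < n - k then i else -1
  have hstep : ∀ i : Fin (n - 1), Cvert n k i = partialSum (i + 1) - partialSum i := by
    intro i
    simp only [Cvert, partialSum]
    obtain h | h | h := lt_trichotomy ((i : ℕ) + 1) (n - k)
    · rw [if_pos h, if_pos h, if_pos (Nat.lt_of_succ_lt h)]
      push_cast
      ring
    · have hcast : (i : ℝ) + 1 = n - k := by
        rw [← Nat.cast_sub hkn.le, ← h, Nat.cast_succ]
      rw [if_neg h.not_lt, if_pos h, if_neg h.not_lt, if_pos (by omega), ← hcast]
      ring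
    · rw [if_neg h.not_gt, if_neg h.ne', if_neg h.not_gt, if_neg (by omega), sub_self]
  calc
    ∑ i, Cvert n k i = ∑ i ∈ range (n - 1), (partialSum (i + 1) - partialSum i) := by
      rw [← Fin.sum_univ_eq_sum_range fun i => partialSum (i + 1) - partialSum i]
      exact Fintype.sum_congr _ _ hstep
    _ = partialSum (n - 1) - partialSum 0 := sum_range_sub partialSum (n - 1)
    _ = -1 := by
      simp only [partialSum]
      rw [if_neg (by omega), if_pos (by omega), Nat.cast_zero, sub_zero]

theorem Cvert_dotProduct_Cvert_of_lt (hjk : j < k) (hkn : k < n) :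
    Cvert n j ⬝ᵥ Cvert n k = -1 := by
  simp only [dotProduct, Cvert_mul_Cvert_of_lt hjk, sum_Cvert (Nat.zero_lt_of_lt hjk) hkn]

theorem Cvert_dotProduct_Cvert_of_ne (hjk : j ≠ k) (hjn : j < n) (hkn : k < n) :
    Cvert n j ⬝ᵥ Cvert n k = -1 := by
  obtain h | h := hjk.lt_or_gt
  · exact Cvert_dotProduct_Cvert_of_lt h hkn
  · rw [dotProduct_comm, Cvert_dotProduct_Cvert_of_lt h hjn]

theorem Qpoly_eq_convexHull_range (hn : 0 < n) :
    Qpoly n = convexHull ℝ (Set.range fun j : Fin n => Cvert n j) := by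
  rw [Qpoly]
  congr 1
  ext x
  constructor
  · rintro ⟨j, hj, rfl⟩
    exact ⟨⟨j, by omega⟩, rfl⟩
  · rintro ⟨j, rfl⟩
    exact ⟨j, by omega, rfl⟩

end Vertices

/-- For every integer `n ≥ 2`, the dual polytope of `Q_n` equals
`-Q_n = {-x : x ∈ Q_n}`. -/
theorem stmt_3 (n : ℕ) (hn : 2 ≤ n) :
    dualPoly (Qpoly n) = (fun x : Fin (n - 1) → ℝ => -x) '' Qpoly n := by
  have hcard : Fintype.card (Fin n) = n - 1 + 1 := by
    rw [Fintype.card_fin]; omega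
  have hdot : ∀ j k : Fin n, j ≠ k → Cvert n j ⬝ᵥ Cvert n k = -1 := fun j k hjk =>
    Cvert_dotProduct_Cvert_of_ne (Fin.val_ne_of_ne hjk) j.isLt k.isLt
  rw [Qpoly_eq_convexHull_range (by omega), Set.image_neg_eq_neg]
  exact dualPoly_convexHull_range_eq_neg hcard hdot
end

section
/- For every integer n ≥ 2, the normalized volume of Q_n equals n!; equivalently, the Euclidean (Lebesgue) volume of the (n−1)-dimensional simplex Q_n ⊂ ℝ^{n−1} equals n!/(n−1)! = n. -/
open Finset

/-!
An affine change of coordinates carries the corner simplex `{x ≥ 0, ∑ xᵢ ≤ 1}`, whose volume is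
`1 / d!` by slicing along one coordinate, onto any simplex in `ℝ^d`; so the volume of a simplex is
`|det| / d!`, the determinant being that of the edge vectors at one vertex. For `Q_n`, the edge
vectors `C_j - C_0`, listed by decreasing `j`, form an upper triangular matrix with diagonal
`-2, -3, …, -n`, whence `|det| = n!`.
-/

open MeasureTheory
open scoped Nat Pointwise

section CornerSimplex

variable {ι : Type*} [Fintype ι]

variable (ι) in
/-- The corner simplex of size `t` in `ι → ℝ`, cut out of the nonnegative orthant by the half-space
`∑ i, x i ≤ t`. For `t = 1` it is the reference simplex with which all others are compared. -/
def cornerSimplex (t : ℝ) : Set (ι → ℝ) :=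
  {x | (∀ i, 0 ≤ x i) ∧ ∑ i, x i ≤ t}

lemma isClosed_cornerSimplex (t : ℝ) : IsClosed (cornerSimplex ι t) := by
  simp only [cornerSimplex, Set.ofPred_and, Set.ofPred_forall]
  exact (isClosed_iInter fun i => isClosed_le continuous_const (continuous_apply i)).inter
    (isClosed_le (by fun_prop) continuous_const)

lemma cornerSimplex_eq_empty {t : ℝ} (ht : t < 0) : cornerSimplex ι t = ∅ :=
  Set.eq_empty_of_forall_notMem fun _ hx =>
    (hx.2.trans_lt ht).not_ge (Finset.sum_nonneg fun i _ => hx.1 i)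

lemma volume_cornerSimplex_of_isEmpty [IsEmpty ι] {t : ℝ} (ht : 0 ≤ t) :
    volume (cornerSimplex ι t) = 1 := by
  have : cornerSimplex ι t = Set.univ := by
    ext
    simp [cornerSimplex, ht]
  rw [this, volume_pi, Measure.pi_univ, Finset.univ_eq_empty, Finset.prod_empty]

lemma volume_cornerSimplex_congr {κ : Type*} [Fintype κ] (e : ι ≃ κ) (t : ℝ) :
    volume (cornerSimplex κ t) = volume (cornerSimplex ι t) := by
  rw [← (volume_measurePreserving_piCongrLeft (fun _ : κ => ℝ) e).measure_preimage_equiv]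
  congr 1
  ext x
  have reindex (i : ι) : Equiv.piCongrLeft (fun _ => ℝ) e x (e i) = x i :=
    Equiv.piCongrLeft_apply_apply (fun _ => ℝ) e x i
  simp only [cornerSimplex, Set.mem_preimage, MeasurableEquiv.coe_piCongrLeft,
    Set.mem_ofPred_eq, ← e.forall_congr_right, ← e.sum_comp, reindex]

lemma volume_cornerSimplex_option (t : ℝ) :
    volume (cornerSimplex (Option ι) t) =
      ∫⁻ a in Set.Icc 0 t, volume (cornerSimplex ι (t - a)) := by
  let e := (MeasurableEquiv.piOptionEquivProd fun _ : Option ι => ℝ).symm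
  have map_volume : (volume.prod volume).map e = volume :=
    Measure.pi_map_piOptionEquivProd fun _ : Option ι => volume
  have slice (a : ℝ) : (fun x => (x, a)) ⁻¹' (e ⁻¹' cornerSimplex (Option ι) t) =
      {x | 0 ≤ a ∧ x ∈ cornerSimplex ι (t - a)} := by
    ext x
    have e_none : e (x, a) none = a := rfl
    have e_some (i : ι) : e (x, a) (some i) = x i := rfl
    simp only [cornerSimplex, Set.mem_preimage, Set.mem_ofPred_eq, Option.forall,
      Fintype.sum_option, e_none, e_some, and_assoc, le_sub_iff_add_le']
  calc volume (cornerSimplex (Option ι) t)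
      = (volume.prod volume) (e ⁻¹' cornerSimplex (Option ι) t) := by
        rw [← e.map_apply, map_volume]
    _ = ∫⁻ a, volume {x | 0 ≤ a ∧ x ∈ cornerSimplex ι (t - a)} := by
        rw [Measure.prod_apply_symm (e.measurable (isClosed_cornerSimplex t).measurableSet)]
        simp only [slice]
    _ = ∫⁻ a in Set.Icc 0 t, volume (cornerSimplex ι (t - a)) := by
        rw [← lintegral_indicator measurableSet_Icc]
        congr with a
        by_cases ha : 0 ≤ a <;> by_cases hat : a ≤ t <;>
          simp [ha, hat, cornerSimplex_eq_empty, not_le.1]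

lemma lintegral_Icc_sub_pow_div_factorial (d : ℕ) {t : ℝ} (ht : 0 ≤ t) :
    ∫⁻ a in Set.Icc 0 t, ENNReal.ofReal ((t - a) ^ d / d !) =
      ENNReal.ofReal (t ^ (d + 1) / (d + 1)!) := by
  have nonneg : ∀ᵐ a ∂volume.restrict (Set.Icc 0 t), 0 ≤ (t - a) ^ d / (d ! : ℝ) :=
    ae_restrict_of_forall_mem measurableSet_Icc fun a ha =>
      div_nonneg (pow_nonneg (sub_nonneg.2 ha.2) d) (Nat.cast_nonneg _)
  rw [← ofReal_integral_eq_lintegral_ofReal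
      (Continuous.integrableOn_Icc (by fun_prop)) nonneg,
    integral_Icc_eq_integral_Ioc, ← intervalIntegral.integral_of_le ht,
    intervalIntegral.integral_div, intervalIntegral.integral_comp_sub_left (· ^ d), sub_self,
    sub_zero, integral_pow, zero_pow d.succ_ne_zero, sub_zero, div_div, Nat.factorial_succ]
  push_cast
  rfl

theorem volume_cornerSimplex {t : ℝ} (ht : 0 ≤ t) :
    volume (cornerSimplex ι t) =
      ENNReal.ofReal (t ^ Fintype.card ι / (Fintype.card ι)!) := by
  revert t
  refine Fintype.induction_empty_option (P := fun ι _ => ∀ {t : ℝ}, 0 ≤ t →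
    volume (cornerSimplex ι t) = ENNReal.ofReal (t ^ Fintype.card ι / (Fintype.card ι)!))
    ?of_equiv ?empty ?option ι
  case of_equiv =>
    intro α β _ e ih t ht
    let _ := Fintype.ofEquiv β e.symm
    rw [volume_cornerSimplex_congr e, ih ht, Fintype.card_congr e]
  case empty =>
    intro t ht
    simp [volume_cornerSimplex_of_isEmpty ht]
  case option =>
    intro α _ ih t ht
    rw [volume_cornerSimplex_option, Fintype.card_option,
      ← lintegral_Icc_sub_pow_div_factorial _ ht]
    exact setLIntegral_congr_fun measurableSet_Icc fun a ha => ih (sub_nonneg.2 ha.2)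

lemma convexHull_insert_zero_range_single [DecidableEq ι] :
    convexHull ℝ (insert 0 (Set.range fun i : ι => Pi.single i (1 : ℝ))) = cornerSimplex ι 1 := by
  -- Forgetting the coordinate `none` maps the standard simplex onto the corner simplex.
  let forget : (Option ι → ℝ) →ₗ[ℝ] (ι → ℝ) := LinearMap.funLeft ℝ ℝ some
  have vertices : insert 0 (Set.range fun i : ι => Pi.single i (1 : ℝ)) =
      forget '' Set.range fun o => Pi.single o 1 := by
    rw [← Set.range_comp, Option.range_eq]
    congr! with i
    ext j
    simp [forget, LinearMap.funLeft_apply, Pi.single_apply]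
  rw [vertices, ← LinearMap.image_convexHull, convexHull_rangle_single_eq_stdSimplex]
  ext x
  constructor
  · rintro ⟨y, ⟨nonneg, sum_eq⟩, rfl⟩
    rw [Fintype.sum_option] at sum_eq
    exact ⟨fun i => nonneg (some i), sum_eq ▸ le_add_of_nonneg_left (nonneg none)⟩
  · rintro ⟨nonneg, sum_le⟩
    refine ⟨fun o => o.elim (1 - ∑ i, x i) x, ⟨?_, by simp [Fintype.sum_option]⟩, rfl⟩
    exact Option.forall.2 ⟨sub_nonneg.2 sum_le, nonneg⟩

theorem volume_convexHull_insert_range [DecidableEq ι] (p : ι → ℝ) (v : ι → ι → ℝ) :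
    volume (convexHull ℝ (insert p (Set.range v))) =
      ENNReal.ofReal (|(Matrix.of fun i => v i - p).det| / (Fintype.card ι)!) := by
  set edges := Matrix.of fun i => v i - p
  have vertices : insert p (Set.range v) =
      p +ᵥ edges.transpose.toLin' '' insert 0 (Set.range fun i => Pi.single i 1) := by
    rw [Set.image_insert_eq, ← Set.range_comp, ← Set.image_vadd, Set.image_insert_eq,
      ← Set.range_comp]
    congr!
    · simp
    · ext
      simp [edges]
  rw [vertices, convexHull_vadd, measure_vadd, ← LinearMap.image_convexHull,
    convexHull_insert_zero_range_single, Measure.addHaar_image_linearMap, LinearMap.det_toLin',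
    Matrix.det_transpose, volume_cornerSimplex zero_le_one, one_pow,
    ← ENNReal.ofReal_mul (abs_nonneg _), mul_one_div]

end CornerSimplex

section Qpoly

variable (n : ℕ)

/-- The matrix whose rows are the edge vectors `C_{n-1} - C_0, …, C_1 - C_0` of `Q_n`, in this
order: listing the vertices backwards makes it upper triangular. -/
noncomputable def edgeMatrix : Matrix (Fin (n - 1)) (Fin (n - 1)) ℝ :=
  Matrix.of fun k => Cvert n (n - 1 - k) - Cvert n 0

lemma Qpoly_eq_convexHull_insert_range :
    Qpoly n =
      convexHull ℝ (insert (Cvert n 0) (Set.range fun k : Fin (n - 1) => Cvert n (n - 1 - k))) := by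
  rw [Qpoly]
  congr 1
  ext x
  constructor
  · rintro ⟨j, hj, rfl⟩
    rcases j.eq_zero_or_pos with rfl | j_pos
    · exact Set.mem_insert _ _
    · refine Set.mem_insert_of_mem _ ⟨⟨n - 1 - j, by omega⟩, ?_⟩
      simp only [Nat.sub_sub_self hj]
  · rintro (rfl | ⟨k, rfl⟩)
    · exact ⟨0, Nat.zero_le _, rfl⟩
    · exact ⟨n - 1 - k, Nat.sub_le _ _, rfl⟩

variable {n}

lemma edgeMatrix_apply (k i : Fin (n - 1)) :
    edgeMatrix n k i = if i < k then 0 else if i = k then -((k : ℝ) + 2) else -1 := by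
  have hk := k.isLt
  have hi := i.isLt
  have index : n - (n - 1 - k) = k + 1 := by omega
  have index_cast : (n : ℝ) - (n - 1 - k : ℕ) = k + 1 := by
    rw [← Nat.cast_sub (by omega), index, Nat.cast_succ]
  have zero_apply : Cvert n 0 i = 1 := if_pos (by omega)
  rw [edgeMatrix, Matrix.of_apply, Pi.sub_apply, zero_apply]
  simp only [Cvert, index, index_cast,
    Nat.add_lt_add_iff_right, Nat.add_right_cancel_iff, Fin.val_fin_lt, Fin.val_inj]
  split_ifs <;> ring

lemma isUpperTriangular_edgeMatrix : (edgeMatrix n).IsUpperTriangular := fun k i hik =>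
  (edgeMatrix_apply k i).trans (if_pos hik)

variable (n)

theorem abs_det_edgeMatrix : |(edgeMatrix n).det| = n ! := by
  have abs_diag (k : Fin (n - 1)) : |edgeMatrix n k k| = (k + 1 + 1 : ℕ) := by
    rw [edgeMatrix_apply, if_neg (lt_irrefl k), if_pos rfl, abs_neg, abs_of_nonneg (by positivity)]
    push_cast
    ring
  rw [Matrix.det_of_isUpperTriangular isUpperTriangular_edgeMatrix, Finset.abs_prod]
  simp only [abs_diag]
  rw [Fin.prod_univ_eq_prod_range fun k => ((k + 1 + 1 : ℕ) : ℝ), ← Nat.cast_prod,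
    ← Finset.prod_range_add_one_eq_factorial]
  rcases n with _ | m
  · rfl
  · rw [Finset.prod_range_succ', zero_add, mul_one, Nat.add_sub_cancel]

theorem volume_Qpoly : volume (Qpoly n) = ENNReal.ofReal (n ! / (n - 1)!) := by
  rw [Qpoly_eq_convexHull_insert_range, volume_convexHull_insert_range, Fintype.card_fin,
    ← abs_det_edgeMatrix n, edgeMatrix]

end Qpoly

/-- For every integer `n ≥ 2`, the normalized volume of `Q_n`, i.e.
`(n-1)!` times the Euclidean (Lebesgue) volume of the `(n-1)`-dimensional simplex
`Q_n ⊂ ℝ^{n-1}`, equals `n!`; equivalently its Euclidean volume is `n!/(n-1)! = n`. -/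
theorem stmt_6 (n : ℕ) (hn : 2 ≤ n) :
    ((n - 1).factorial : ENNReal) * MeasureTheory.volume (Qpoly n) = (n.factorial : ENNReal) ∧
    MeasureTheory.volume (Qpoly n) = (n : ENNReal) := by
  have factorial_eq : n ! = n * (n - 1)! := (Nat.mul_factorial_pred (by omega)).symm
  have volume_eq : volume (Qpoly n) = n := by
    rw [volume_Qpoly, factorial_eq, Nat.cast_mul,
      mul_div_cancel_right₀ _ (Nat.cast_ne_zero.2 (Nat.factorial_ne_zero _)),
      ENNReal.ofReal_natCast]
  exact ⟨by rw [volume_eq, factorial_eq, Nat.cast_mul, mul_comm], volume_eq⟩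
end

section
/- For every integer n ≥ 2, the pyramid Pyr(Q_n) = conv(Q_n × {0}, (0,…,0,1)) ⊂ ℝ^n is unimodularly equivalent to the n-dimensional lecture hall simplex R_n = conv{v_0, v_1, …, v_n} ⊂ ℝ^n, where v_0 = 0 and, for 1 ≤ j ≤ n, (v_j)_i = i for n−j+1 ≤ i ≤ n and (v_j)_i = 0 for i ≤ n−j. -/
open Finset

/-- Two polytopes `P₁, P₂ ⊂ ℝ^d` are *unimodularly equivalent* if there are a matrix
`U ∈ ℤ^{d×d}` with `det U = ±1` and a vector `v ∈ ℤ^d` with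
`P₂ = {xU + v : x ∈ P₁}` (row vector times matrix: `(xU)_j = ∑ i, x_i U_{ij}`). -/
def UnimodEquiv {d : ℕ} (P₁ P₂ : Set (Fin d → ℝ)) : Prop :=
  ∃ (U : Matrix (Fin d) (Fin d) ℤ) (v : Fin d → ℤ),
    (U.det = 1 ∨ U.det = -1) ∧
    P₂ = (fun x : Fin d → ℝ => fun jc => (∑ i, x i * (U i jc : ℝ)) + (v jc : ℝ)) '' P₁

/-- The pyramid `Pyr(P) = conv(P × {0}, (0,…,0,1)) ⊂ ℝ^{d+1}` over `P ⊂ ℝ^d`. -/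
noncomputable def pyr {d : ℕ} (P : Set (Fin d → ℝ)) : Set (Fin (d + 1) → ℝ) :=
  convexHull ℝ
    ((fun x : Fin d → ℝ => Fin.snoc x 0) '' P ∪ {Fin.snoc (0 : Fin d → ℝ) 1})

/-- The vertex `v_j` of the lecture hall simplex `R_n ⊂ ℝ^n`:
`(v_j)_i = i` (1-based coordinate value) for `n - j + 1 ≤ i ≤ n` and `(v_j)_i = 0`
for `i ≤ n - j`; in particular `v_0 = 0`. -/
noncomputable def vvert (n j : ℕ) : Fin n → ℝ := fun i =>
  if n - j + 1 ≤ (i : ℕ) + 1 then (((i : ℕ) + 1 : ℕ) : ℝ) else 0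

/-- The lecture hall simplex `R_n = conv{v_0, v_1, …, v_n} ⊂ ℝ^n`. -/
noncomputable def Rsimplex (n : ℕ) : Set (Fin n → ℝ) :=
  convexHull ℝ {x | ∃ j ≤ n, x = vvert n j}

/-!
Let `U` be the integer matrix acting on row vectors by `((x, t) U)_c = t - (x_1 + ⋯ + x_{c-1})`.
Moving its last row to the top makes it upper triangular with diagonal `1, -1, …, -1`, so it is
unimodular. The partial sums `x_1 + ⋯ + x_{c-1}` of `x = C_j` are `c - 1` as long as `c ≤ n - j`;
the next entry `-(n - j)` brings them down to `-1`, where they stay. Translating by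
`(0, 1, …, n-1)` therefore sends `(C_j, 0)` to the vector with entries `0` for `c ≤ n - j` and
`c` afterwards, which is `v_j`, and sends the apex `(0, 1)` to `(1, 2, …, n) = v_n`.
-/

/-- The affine map `x ↦ xU + v` of `ℝ^d` given by an integer matrix `U`, acting on row vectors as
in `UnimodEquiv`, and an integer translation `v`. -/
noncomputable def latticeAffineMap {d : ℕ} (U : Matrix (Fin d) (Fin d) ℤ) (v : Fin d → ℤ) :
    (Fin d → ℝ) →ᵃ[ℝ] (Fin d → ℝ) :=
  (U.map (Int.cast : ℤ → ℝ)).vecMulLinear.toAffineMap + AffineMap.const ℝ _ fun c => (v c : ℝ)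

lemma latticeAffineMap_apply {d : ℕ} (U : Matrix (Fin d) (Fin d) ℤ) (v : Fin d → ℤ)
    (x : Fin d → ℝ) (c : Fin d) :
    latticeAffineMap U v x c = (∑ i, x i * (U i c : ℝ)) + (v c : ℝ) := by
  simp [latticeAffineMap, Matrix.vecMul, dotProduct]

lemma unimodEquiv_convexHull {d : ℕ} {U : Matrix (Fin d) (Fin d) ℤ} {v : Fin d → ℤ}
    {S T : Set (Fin d → ℝ)} (hU : U.det = 1 ∨ U.det = -1) (hST : latticeAffineMap U v '' S = T) :
    UnimodEquiv (convexHull ℝ S) (convexHull ℝ T) := by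
  refine ⟨U, v, hU, ?_⟩
  rw [← hST, ← AffineMap.image_convexHull]
  exact Set.image_congr fun x _ => funext (latticeAffineMap_apply U v x)

lemma isLinearMap_snoc_zero (R : Type*) [Semiring R] (d : ℕ) :
    IsLinearMap R fun x : Fin d → R => (Fin.snoc x 0 : Fin (d + 1) → R) where
  map_add x y := by ext i; cases i using Fin.lastCases <;> simp
  map_smul r x := by ext i; cases i using Fin.lastCases <;> simp

lemma pyr_convexHull {d : ℕ} (S : Set (Fin d → ℝ)) :
    pyr (convexHull ℝ S) =
      convexHull ℝ ((fun x : Fin d → ℝ => Fin.snoc x 0) '' S ∪ {Fin.snoc (0 : Fin d → ℝ) 1}) := by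
  rw [pyr, (isLinearMap_snoc_zero ℝ d).image_convexHull, convexHull_convexHull_union_left]

lemma sum_castSucc_lt_eq_partialSum {M : Type*} [AddCommMonoid M] {m : ℕ} (x : Fin m → M)
    (c : Fin (m + 1)) : ∑ i with Fin.castSucc i < c, x i = Fin.partialSum x c := by
  induction c using Fin.induction with
  | zero => simp
  | succ c ih =>
    have initial_segment : univ.filter (fun i : Fin m => i.castSucc < c.succ) =
        insert c (univ.filter fun i => i.castSucc < c.castSucc) := by
      ext i
      simp [Fin.castSucc_lt_succ_iff, le_iff_eq_or_lt]
    rw [initial_segment, sum_insert (by simp), ih, Fin.partialSum_succ, add_comm]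

/-- The integer matrix whose action on row vectors `(x, t)` subtracts the partial sums of `x` from
`t`, see `sum_snoc_mul_subPartialSumMatrix`; it is the linear part of the equivalence between
`Pyr(Q_n)` and `R_n` for `n = m + 1`. -/
def subPartialSumMatrix (m : ℕ) : Matrix (Fin (m + 1)) (Fin (m + 1)) ℤ :=
  Matrix.of (Fin.snoc (fun i c => if i.castSucc < c then -1 else 0) 1)

lemma sum_snoc_mul_subPartialSumMatrix {R : Type*} [Ring R] {m : ℕ} (x : Fin m → R) (t : R)
    (c : Fin (m + 1)) :
    ∑ i, (Fin.snoc x t : Fin (m + 1) → R) i * (subPartialSumMatrix m i c : R) =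
      t - Fin.partialSum x c := by
  simp [Fin.sum_univ_castSucc, subPartialSumMatrix, ← sum_castSucc_lt_eq_partialSum, sum_filter,
    apply_ite, sub_eq_neg_add, ← sum_neg_distrib]

lemma det_subPartialSumMatrix (m : ℕ) : (subPartialSumMatrix m).det = 1 := by
  let T : Matrix (Fin (m + 1)) (Fin (m + 1)) ℤ :=
    Matrix.of (Fin.cons 1 fun i c => if i.castSucc < c then -1 else 0)
  have rotate_rows : subPartialSumMatrix m = T.submatrix (finRotate (m + 1)) id := by
    ext i c
    simp [subPartialSumMatrix, T, Fin.snoc_eq_cons_rotate]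
  have upper_triangular : T.IsUpperTriangular := by
    intro i c hci
    cases i using Fin.cases with
    | zero => exact absurd hci (Fin.not_lt_zero c)
    | succ i => simpa [T, Fin.le_castSucc_iff] using hci
  have det_T : T.det = (-1) ^ m := by
    rw [Matrix.det_of_isUpperTriangular upper_triangular, Fin.prod_univ_succ]
    simp [T]
  rw [rotate_rows, Matrix.det_permute, det_T, sign_finRotate]
  simp [← mul_pow]

lemma partialSum_Cvert {m j : ℕ} (hj : j ≤ m) (c : Fin (m + 1)) :
    Fin.partialSum (Cvert (m + 1) j) c = if (c : ℕ) < m + 1 - j then (c : ℝ) else -1 := by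
  induction c using Fin.induction with
  | zero => simp [show 0 < m + 1 - j by omega]
  | succ c ih =>
    rw [Fin.partialSum_succ, ih, Fin.val_castSucc, Fin.val_succ, Cvert]
    rcases lt_trichotomy ((c : ℕ) + 1) (m + 1 - j) with below | pivot | above
    · simp [below, Nat.lt_of_succ_lt below]
    · have pivot_real : ((m + 1 : ℕ) : ℝ) - j = c + 1 := by
        rw [← Nat.cast_sub (by omega), ← pivot, Nat.cast_succ]
      rw [pivot_real]
      simp [← pivot]
    · simp [show ¬ (c : ℕ) < m + 1 - j by omega, above.not_gt, above.ne']

/-- The affine map `(x, t) ↦ (x, t) U + (0, 1, …, m)` with `U = subPartialSumMatrix m`, which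
carries the vertices of `Pyr(Q_{m+1})` to those of `R_{m+1}`. -/
noncomputable def lectureHallMap (m : ℕ) : (Fin (m + 1) → ℝ) →ᵃ[ℝ] (Fin (m + 1) → ℝ) :=
  latticeAffineMap (subPartialSumMatrix m) fun c => (c : ℕ)

lemma lectureHallMap_snoc {m : ℕ} (x : Fin m → ℝ) (t : ℝ) (c : Fin (m + 1)) :
    lectureHallMap m (Fin.snoc x t) c = t - Fin.partialSum x c + (c : ℕ) := by
  rw [lectureHallMap, latticeAffineMap_apply, sum_snoc_mul_subPartialSumMatrix, Int.cast_natCast]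

lemma lectureHallMap_snoc_Cvert {m j : ℕ} (hj : j ≤ m) :
    lectureHallMap m (Fin.snoc (Cvert (m + 1) j) 0) = vvert (m + 1) j := by
  ext c
  rw [lectureHallMap_snoc, partialSum_Cvert hj, vvert]
  rcases lt_or_ge (c : ℕ) (m + 1 - j) with before | after
  · simp [before, before.not_ge]
  · simp [after, after.not_gt, add_comm (1 : ℝ)]

lemma lectureHallMap_apex (m : ℕ) :
    lectureHallMap m (Fin.snoc (0 : Fin m → ℝ) 1) = vvert (m + 1) (m + 1) := by
  ext c
  simp [lectureHallMap_snoc, ← sum_castSucc_lt_eq_partialSum, vvert, add_comm]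

lemma image_lectureHallMap_vertices (m : ℕ) :
    lectureHallMap m '' ((fun x => Fin.snoc x 0) '' {x | ∃ j ≤ m, x = Cvert (m + 1) j} ∪
      {Fin.snoc (0 : Fin m → ℝ) 1}) = {x | ∃ j ≤ m + 1, x = vvert (m + 1) j} := by
  have image_base :
      (fun x => lectureHallMap m (Fin.snoc x 0)) '' {x | ∃ j ≤ m, x = Cvert (m + 1) j} =
        {y | ∃ j ≤ m, y = vvert (m + 1) j} := by
    ext y
    constructor
    · rintro ⟨_, ⟨j, hj, rfl⟩, rfl⟩
      exact ⟨j, hj, lectureHallMap_snoc_Cvert hj⟩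
    · rintro ⟨j, hj, rfl⟩
      exact ⟨_, ⟨j, hj, rfl⟩, lectureHallMap_snoc_Cvert hj⟩
  rw [Set.image_union, Set.image_image, image_base, Set.image_singleton, lectureHallMap_apex]
  ext y
  simp [Nat.le_succ_iff, or_and_right, exists_or, or_comm]

/-- For every integer `n ≥ 2`, the pyramid
`Pyr(Q_n) = conv(Q_n × {0}, (0,…,0,1)) ⊂ ℝ^n` is unimodularly equivalent to the
`n`-dimensional lecture hall simplex `R_n` (here `n = (n-1)+1` since `n ≥ 2`). -/
theorem stmt_8 (n : ℕ) (hn : 2 ≤ n) :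
    UnimodEquiv (pyr (Qpoly n)) (Rsimplex (n - 1 + 1)) := by
  obtain ⟨m, rfl⟩ : ∃ m, n = m + 1 := ⟨n - 1, by omega⟩
  change UnimodEquiv (pyr (Qpoly (m + 1))) (Rsimplex (m + 1))
  rw [Qpoly, pyr_convexHull, Rsimplex]
  exact unimodEquiv_convexHull (.inl (det_subPartialSumMatrix m)) (image_lectureHallMap_vertices m)
end

section
/- For every integer n ≥ 2, the δ-polynomial of Q_n equals the n-th Eulerian polynomial A_n(z) = Σ_{σ ∈ S_n} z^{des(σ)}; equivalently, as formal power series in z, (1 − z)^n · ( Σ_{k ≥ 0} #(kQ_n ∩ ℤ^{n−1}) · z^k ) = Σ_{σ ∈ S_n} z^{des(σ)}, where the k = 0 term of the sum is 1. -/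
open Finset Pointwise

/-- The lattice point enumerator `i(Q_n, k) = #(kQ_n ∩ ℤ^{n-1})` (for `k = 0` this
equals `1`, since `0·Q_n = {0}`). -/
noncomputable def latticeCount (n k : ℕ) : ℕ :=
  Set.ncard {x : Fin (n - 1) → ℤ | (fun i => (x i : ℝ)) ∈ (k : ℝ) • Qpoly n}

/-- The number of descents of a permutation `σ` of `{1, …, n}`: the number of indices
`1 ≤ i ≤ n-1` with `σ(i) > σ(i+1)`, counted here as the number of pairs of adjacent
positions `(p₁, p₂)` with `p₂ = p₁ + 1` and `σ p₂ < σ p₁`. -/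
def descents (n : ℕ) (σ : Equiv.Perm (Fin n)) : ℕ :=
  (Finset.univ.filter (fun p : Fin n × Fin n =>
    (p.2 : ℕ) = (p.1 : ℕ) + 1 ∧ σ p.2 < σ p.1)).card

/-!
A lattice point `x` of `k • Q_{N+1}` is the same as a sequence `T i = k + x 0 + ⋯ + x (i - 1)` of
natural numbers, `0 ≤ i ≤ N`, starting at `T 0 = k` and such that the ratios `T i / (i + 1)`
decrease weakly: the successive differences of these ratios are the weights, of total `k`, with
which `x` is a combination of the vertices.

Let `a n k t` be the number of such sequences `k = T 0, …, T n = t`. Removing the last term gives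
`a (n + 1) k t = ∑_{s ≥ t} a n k s` for `t ≤ n + 1`, and adding the sequence `1, 2, …, n + 1`, whose
ratios are all equal, gives `a n (k + 1) (t + n + 1) = a n k t`. Hence the generating functions
`F n t = ∑ₖ a n k t zᵏ` satisfy
`(1 - z) F (n + 1) t = z ∑_{r < t} F n r + ∑_{t ≤ r ≤ n} F n r`,
which is the recursion for the Eulerian polynomials refined by the first value of the permutation,
and setting `t = 0` forgets the refinement.
-/

section AntiLectureHall

variable {R : Type*} {n : ℕ}

/-- An anti-lecture hall sequence `T 0, …, T n`: the ratios `T i / (i + 1)` are weakly decreasing,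
a condition stated here without denominators so that it makes sense over `ℕ` as well as over `ℝ`.
No sign condition is imposed. -/
def IsAntiLectureHall [Semiring R] [LE R] (T : Fin (n + 1) → R) : Prop :=
  ∀ i : Fin n, ((i : R) + 1) * T i.succ ≤ ((i : R) + 2) * T i.castSucc

lemma isAntiLectureHall_natCast_iff [Semiring R] [PartialOrder R] [IsStrictOrderedRing R]
    {T : Fin (n + 1) → ℕ} :
    IsAntiLectureHall (fun i => (T i : R)) ↔ IsAntiLectureHall T := by
  simp only [IsAntiLectureHall, Nat.cast_id]
  exact forall_congr' fun i => by exact_mod_cast Iff.rfl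

lemma isAntiLectureHall_snoc_iff [Semiring R] [LE R] {T : Fin (n + 1) → R} {t : R} :
    IsAntiLectureHall (Fin.snoc T t : Fin (n + 2) → R) ↔
      IsAntiLectureHall T ∧ ((n : R) + 1) * t ≤ ((n : R) + 2) * T (Fin.last n) := by
  simp only [IsAntiLectureHall, Fin.forall_fin_succ', Fin.val_castSucc, Fin.val_last,
    Fin.succ_castSucc, Fin.succ_last, Nat.succ_eq_add_one, Fin.snoc_castSucc, Fin.snoc_last]

lemma isAntiLectureHall_iff_antitone_div [Field R] [LinearOrder R] [IsStrictOrderedRing R]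
    {T : Fin (n + 1) → R} :
    IsAntiLectureHall T ↔ Antitone fun i : Fin (n + 1) => T i / ((i : R) + 1) := by
  rw [Fin.antitone_iff_succ_le]
  refine forall_congr' fun i => ?_
  have hcast : (((i.succ : Fin (n + 1)) : ℕ) : R) + 1 = (i : R) + 2 := by
    rw [Fin.val_succ]; push_cast; ring
  rw [hcast, Fin.val_castSucc, div_le_div_iff₀ (by positivity) (by positivity), mul_comm,
    mul_comm (T _) ((i : R) + 2)]

lemma IsAntiLectureHall.mul_le_mul [CommSemiring R] [LinearOrder R] [IsStrictOrderedRing R]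
    {T : Fin (n + 1) → R} (hT : IsAntiLectureHall T) {i j : Fin (n + 1)} (hij : i ≤ j) :
    ((i : R) + 1) * T j ≤ ((j : R) + 1) * T i := by
  induction j using Fin.induction with
  | zero => rw [Fin.le_zero_iff.1 hij]
  | succ j ih =>
    obtain rfl | hij := hij.eq_or_lt
    · rfl
    have hstep : ((j : R) + 1) * T j.succ ≤ ((j : R) + 2) * T j.castSucc := hT j
    have hprev : ((i : R) + 1) * T j.castSucc ≤ ((j : R) + 1) * T i :=
      ih (Fin.le_castSucc_iff.2 hij)
    rw [Fin.val_succ, Nat.cast_add_one, add_assoc, one_add_one_eq_two]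
    refine le_of_mul_le_mul_left ?_ (by positivity : (0 : R) < (j : R) + 1)
    calc ((j : R) + 1) * (((i : R) + 1) * T j.succ)
        = ((i : R) + 1) * (((j : R) + 1) * T j.succ) := by ring
      _ ≤ ((i : R) + 1) * (((j : R) + 2) * T j.castSucc) := by gcongr
      _ = ((j : R) + 2) * (((i : R) + 1) * T j.castSucc) := by ring
      _ ≤ ((j : R) + 2) * (((j : R) + 1) * T i) := by gcongr
      _ = ((j : R) + 1) * (((j : R) + 2) * T i) := by ring

lemma isAntiLectureHall_add_iff [CommSemiring R] [PartialOrder R] [IsOrderedCancelAddMonoid R]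
    {T : Fin (n + 1) → R} :
    IsAntiLectureHall (fun i => T i + ((i : R) + 1)) ↔ IsAntiLectureHall T := by
  refine forall_congr' fun i => ?_
  have hsucc : ((i : R) + 1) * (T i.succ + ((i.succ : ℕ) + 1)) =
      ((i : R) + 1) * T i.succ + ((i : R) + 1) * ((i : R) + 2) := by
    rw [Fin.val_succ]
    push_cast
    ring
  have hcastSucc : ((i : R) + 2) * (T i.castSucc + ((i.castSucc : ℕ) + 1)) =
      ((i : R) + 2) * T i.castSucc + ((i : R) + 1) * ((i : R) + 2) := by
    rw [Fin.val_castSucc]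
    ring
  rw [hsucc, hcastSucc, add_le_add_iff_right]

end AntiLectureHall

section PartialSums

lemma const_add_partialSum_eq_iff {G : Type*} [AddCommGroup G] {n : ℕ} {c : G} {x : Fin n → G}
    {T : Fin (n + 1) → G} :
    (∀ i, c + Fin.partialSum x i = T i) ↔
      T 0 = c ∧ ∀ i : Fin n, x i = T i.succ - T i.castSucc := by
  constructor
  · intro h
    refine ⟨by simp [← h], fun i => ?_⟩
    simp [← h, Fin.partialSum_succ]
  · rintro ⟨h0, hx⟩ i
    induction i using Fin.induction with
    | zero => simp [h0]
    | succ i ih => rw [Fin.partialSum_succ, ← add_assoc, ih, hx, add_sub_cancel]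

lemma sum_Ici_castSucc {M : Type*} [AddCommMonoid M] {n : ℕ} (w : Fin (n + 1) → M)
    (i : Fin n) :
    ∑ j ∈ Ici i.castSucc, w j = w i.castSucc + ∑ j ∈ Ici i.succ, w j := by
  rw [← Finset.add_sum_Ioi_eq_sum_Ici]
  congr 2
  ext j
  simp [Fin.castSucc_lt_iff_succ_le]

lemma exists_nonneg_sum_Ici_eq_iff {G : Type*} [AddCommGroup G] [PartialOrder G]
    [IsOrderedAddMonoid G] {n : ℕ} {S : Fin (n + 1) → G} :
    (∃ w : Fin (n + 1) → G, (∀ i, 0 ≤ w i) ∧ ∀ i, ∑ j ∈ Ici i, w j = S i) ↔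
      Antitone S ∧ 0 ≤ S (Fin.last n) := by
  constructor
  · rintro ⟨w, hw, hS⟩
    refine ⟨fun i j hij => ?_, ?_⟩
    · rw [← hS, ← hS]
      exact Finset.sum_le_sum_of_subset_of_nonneg (Finset.Ici_subset_Ici.2 hij)
        fun _ _ _ => hw _
    · rw [← hS]
      exact Finset.sum_nonneg fun _ _ => hw _
  · rintro ⟨hS, hlast⟩
    refine ⟨Fin.lastCases (S (Fin.last n)) fun i => S i.castSucc - S i.succ, fun i => ?_,
      fun i => ?_⟩
    · cases i using Fin.lastCases with
      | last => simpa using hlast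
      | cast i => simpa using hS i.castSucc_le_succ
    · induction i using Fin.reverseInduction with
      | last => simp [show Ici (Fin.last n) = {Fin.last n} from Finset.Ici_top]
      | cast i ih => rw [sum_Ici_castSucc, ih]; simp

end PartialSums

section Simplex

lemma mem_smul_convexHull_range_iff {𝕜 E ι : Type*} [Field 𝕜] [LinearOrder 𝕜]
    [IsStrictOrderedRing 𝕜] [AddCommGroup E] [Module 𝕜 E] [Fintype ι] [Nonempty ι]
    {v : ι → E} {k : 𝕜} (hk : 0 ≤ k) {x : E} :
    x ∈ k • convexHull 𝕜 (Set.range v) ↔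
      ∃ w : ι → 𝕜, (∀ i, 0 ≤ w i) ∧ ∑ i, w i = k ∧ ∑ i, w i • v i = x := by
  classical
  have hull : convexHull 𝕜 (Set.range v) = Fintype.linearCombination 𝕜 v '' stdSimplex 𝕜 ι := by
    rw [← convexHull_rangle_single_eq_stdSimplex, LinearMap.image_convexHull, ← Set.range_comp]
    congr 2
    ext i
    simp
  simp only [hull, Set.mem_smul_set, Set.exists_mem_image, Fintype.linearCombination_apply]
  constructor
  · rintro ⟨w, ⟨hw, hsum⟩, rfl⟩
    refine ⟨k • w, fun i => mul_nonneg hk (hw i), ?_, ?_⟩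
    · simp [← Finset.mul_sum, hsum]
    · simp [Finset.smul_sum, mul_smul]
  · rintro ⟨w, hw, hsum, rfl⟩
    obtain rfl | hk := hk.eq_or_lt
    · obtain ⟨i⟩ := ‹Nonempty ι›
      have hw0 : ∀ i, w i = 0 := by
        simpa using (Finset.sum_eq_zero_iff_of_nonneg fun i _ => hw i).1 hsum
      exact ⟨Pi.single i 1, single_mem_stdSimplex 𝕜 i, by simp [hw0]⟩
    · refine ⟨k⁻¹ • w, ⟨fun i => mul_nonneg (inv_nonneg.2 hk.le) (hw i), ?_⟩, ?_⟩
      · simp [← Finset.mul_sum, hsum, hk.ne']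
      · simp [Finset.smul_sum, smul_smul, hk.ne']

lemma Cvert_succ_sub_apply {N : ℕ} (m : Fin (N + 1)) (i : Fin N) :
    Cvert (N + 1) (N - m) i =
      (if i.succ ≤ m then (i : ℝ) + 2 else 0) - (if i.castSucc ≤ m then (i : ℝ) + 1 else 0) := by
  have hm : N + 1 - (N - (m : ℕ)) = m + 1 := by omega
  have hcast : ((N - m : ℕ) : ℝ) = N - m := Nat.cast_sub m.is_le
  simp only [Cvert, hm, hcast, Fin.le_def, Fin.val_succ, Fin.val_castSucc, add_lt_add_iff_right,
    add_left_inj, Nat.succ_le_iff]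
  obtain him | him | him := lt_trichotomy (i : ℕ) m
  · simp only [him, him.le, if_true]
    ring
  · simp only [him, lt_irrefl, le_refl, if_true, if_false]
    push_cast
    ring
  · simp [him.not_gt, him.not_ge, him.ne']

lemma sum_smul_Cvert_apply {N : ℕ} (w : Fin (N + 1) → ℝ) (i : Fin N) :
    (∑ m : Fin (N + 1), w m • (Cvert (N + 1) (N - m) : Fin N → ℝ)) i =
      ((i : ℝ) + 2) * ∑ m ∈ Ici i.succ, w m - ((i : ℝ) + 1) * ∑ m ∈ Ici i.castSucc, w m := by
  simp only [Finset.sum_apply, Pi.smul_apply, smul_eq_mul, Cvert_succ_sub_apply, mul_sub,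
    Finset.sum_sub_distrib, mul_ite, mul_zero, ← Finset.sum_filter, Finset.filter_le_eq_Ici,
    ← Finset.sum_mul]
  ring

lemma Qpoly_succ_eq_convexHull_range (N : ℕ) :
    Qpoly (N + 1) =
      convexHull ℝ (Set.range fun m : Fin (N + 1) => (Cvert (N + 1) (N - m) : Fin N → ℝ)) := by
  refine congrArg (convexHull ℝ) (Set.ext fun x => ⟨?_, ?_⟩)
  · rintro ⟨j, hj, rfl⟩
    exact ⟨⟨N - j, by omega⟩, congrArg (Cvert (N + 1)) (Nat.sub_sub_self hj)⟩
  · rintro ⟨m, rfl⟩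
    exact ⟨N - m, Nat.sub_le N m, rfl⟩

lemma mem_smul_Qpoly_succ_iff {N : ℕ} {k : ℝ} (hk : 0 ≤ k) {x : Fin N → ℝ} :
    x ∈ k • Qpoly (N + 1) ↔
      IsAntiLectureHall (fun i => k + Fin.partialSum x i) ∧
        0 ≤ k + Fin.partialSum x (Fin.last N) := by
  have barycentric (w : Fin (N + 1) → ℝ) :
      ∑ m, w m = k ∧ ∑ m : Fin (N + 1), w m • (Cvert (N + 1) (N - m) : Fin N → ℝ) = x ↔
        ∀ i : Fin (N + 1), ∑ m ∈ Ici i, w m = (k + Fin.partialSum x i) / ((i : ℝ) + 1) := by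
    have hpos (i : Fin (N + 1)) : ((i : ℝ) + 1) ≠ 0 := by positivity
    simp only [eq_div_iff (hpos _), eq_comm (b := k + _), const_add_partialSum_eq_iff]
    refine and_congr (by simp [show Ici (0 : Fin (N + 1)) = univ from Finset.Ici_bot]) ?_
    rw [eq_comm, funext_iff]
    refine forall_congr' fun i => ?_
    rw [sum_smul_Cvert_apply, Fin.val_succ, Fin.val_castSucc]
    push_cast
    ring_nf
  rw [Qpoly_succ_eq_convexHull_range, mem_smul_convexHull_range_iff hk,
    isAntiLectureHall_iff_antitone_div]
  simp only [barycentric]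
  rw [exists_nonneg_sum_Ici_eq_iff, le_div_iff₀ (by positivity), zero_mul]

end Simplex

section Counting

open Classical in
/-- The finite set of anti-lecture hall sequences `T 0, …, T n` of natural numbers with `T 0 = k`;
the bound `T i ≤ (i + 1) * k` is automatic and only serves to make finiteness evident. -/
noncomputable def antiLectureHall (n k : ℕ) : Finset (Fin (n + 1) → ℕ) :=
  {T ∈ Fintype.piFinset fun i : Fin (n + 1) => Iic (((i : ℕ) + 1) * k) |
    T 0 = k ∧ IsAntiLectureHall T}

/-- The number of anti-lecture hall sequences `T 0, …, T n` of natural numbers with `T 0 = k` and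
`T n = t`. -/
noncomputable def antiLectureHallCount (n k t : ℕ) : ℕ :=
  #{T ∈ antiLectureHall n k | T (Fin.last n) = t}

variable {n k t : ℕ}

lemma mem_antiLectureHall {T : Fin (n + 1) → ℕ} :
    T ∈ antiLectureHall n k ↔ T 0 = k ∧ IsAntiLectureHall T := by
  simp only [antiLectureHall, Finset.mem_filter, Fintype.mem_piFinset, Finset.mem_Iic,
    and_iff_right_iff_imp]
  rintro ⟨rfl, hT⟩ i
  simpa using hT.mul_le_mul (Fin.zero_le i)

lemma apply_last_le_of_mem_antiLectureHall {T : Fin (n + 1) → ℕ} (hT : T ∈ antiLectureHall n k) :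
    T (Fin.last n) ≤ (n + 1) * k := by
  obtain ⟨rfl, hALH⟩ := mem_antiLectureHall.1 hT
  simpa using hALH.mul_le_mul (Fin.zero_le (Fin.last n))

lemma antiLectureHallCount_zero_left (k t : ℕ) :
    antiLectureHallCount 0 k t = if k = t then 1 else 0 := by
  have singleton : antiLectureHall 0 k = {fun _ => k} := by
    ext T
    rw [mem_antiLectureHall, Finset.mem_singleton, funext_iff, Fin.forall_fin_one]
    exact and_iff_left fun i => i.elim0
  rw [antiLectureHallCount, singleton, Finset.filter_singleton, apply_ite card,
    Finset.card_singleton, Finset.card_empty]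

lemma antiLectureHallCount_succ (n k t : ℕ) :
    antiLectureHallCount (n + 1) k t =
      #{T ∈ antiLectureHall n k | (n + 1) * t ≤ (n + 2) * T (Fin.last n)} := by
  refine Finset.card_nbij' Fin.init (fun T => Fin.snoc T t) ?_ ?_ ?_ ?_
  · intro T hT
    obtain ⟨hmem, rfl⟩ := Finset.mem_filter.1 hT
    rw [mem_antiLectureHall, ← Fin.snoc_init_self T, isAntiLectureHall_snoc_iff] at hmem
    simpa [mem_antiLectureHall, Fin.init, and_assoc] using hmem
  · intro T hT
    simpa [mem_antiLectureHall, isAntiLectureHall_snoc_iff, and_assoc, ← Fin.castSucc_zero,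
      -Fin.castSucc_zero'] using hT
  · intro T hT
    obtain ⟨-, rfl⟩ := Finset.mem_filter.1 hT
    exact Fin.snoc_init_self T
  · intro T _
    exact Fin.init_snoc _ _

lemma antiLectureHallCount_succ_zero (n k : ℕ) :
    antiLectureHallCount (n + 1) k 0 = #(antiLectureHall n k) := by
  simp [antiLectureHallCount_succ]

lemma antiLectureHallCount_succ_eq_sum_Ico (ht : t ≤ n + 1) {M : ℕ} (hM : (n + 1) * k < M) :
    antiLectureHallCount (n + 1) k t = ∑ s ∈ Ico t M, antiLectureHallCount n k s := by
  have le_iff (s : ℕ) : (n + 1) * t ≤ (n + 2) * s ↔ t ≤ s :=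
    ⟨fun h => by by_contra! hs; nlinarith, fun h => by nlinarith⟩
  simp only [antiLectureHallCount_succ, le_iff]
  rw [Finset.card_eq_sum_card_fiberwise (f := fun T => T (Fin.last n)) (t := Ico t M)]
  · refine Finset.sum_congr rfl fun s hs => ?_
    rw [antiLectureHallCount, Finset.filter_filter]
    congr 1
    refine Finset.filter_congr fun T _ => and_iff_right_of_imp ?_
    rintro rfl
    exact (Finset.mem_Ico.1 hs).1
  · intro T hT
    obtain ⟨hT, htT⟩ := Finset.mem_filter.1 hT
    exact Finset.mem_coe.2 (Finset.mem_Ico.2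
      ⟨htT, (apply_last_le_of_mem_antiLectureHall hT).trans_lt hM⟩)

lemma antiLectureHallCount_add_add (n k t : ℕ) :
    antiLectureHallCount n (k + 1) (t + (n + 1)) = antiLectureHallCount n k t := by
  symm
  have add_iff {T : Fin (n + 1) → ℕ} :
      IsAntiLectureHall (fun i : Fin (n + 1) => T i + ((i : ℕ) + 1)) ↔ IsAntiLectureHall T :=
    isAntiLectureHall_add_iff
  have sub_add {T : Fin (n + 1) → ℕ} (hT : IsAntiLectureHall T) (hlast : n + 1 ≤ T (Fin.last n)) :
      (fun i : Fin (n + 1) => T i - ((i : ℕ) + 1) + ((i : ℕ) + 1)) = T := by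
    ext i
    have hi : ((i : ℕ) + 1) * T (Fin.last n) ≤ (n + 1) * T i := by
      simpa using hT.mul_le_mul (Fin.le_last i)
    exact Nat.sub_add_cancel (by nlinarith)
  refine Finset.card_nbij' (fun T i => T i + ((i : ℕ) + 1)) (fun T i => T i - ((i : ℕ) + 1))
    ?_ ?_ ?_ ?_
  · intro T hT
    simpa [mem_antiLectureHall, add_iff] using hT
  · intro T hT
    simp only [Finset.coe_filter, Set.mem_ofPred_eq, mem_antiLectureHall] at hT ⊢
    obtain ⟨⟨h0, hALH⟩, hlast⟩ := hT
    rw [← add_iff, sub_add hALH (by omega)]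
    simp [h0, hALH, hlast]
  · intro T _
    simp
  · intro T hT
    simp only [Finset.coe_filter, Set.mem_ofPred_eq, mem_antiLectureHall] at hT
    exact sub_add hT.1.2 (by omega)

lemma antiLectureHallCount_succ_zero_left (ht : t ≤ n + 1) :
    antiLectureHallCount (n + 1) 0 t = ∑ r ∈ Ico t (n + 1), antiLectureHallCount n 0 r :=
  antiLectureHallCount_succ_eq_sum_Ico ht (by simp)

lemma antiLectureHallCount_succ_succ (ht : t ≤ n + 1) :
    antiLectureHallCount (n + 1) (k + 1) t =
      antiLectureHallCount (n + 1) k t + (∑ r ∈ range t, antiLectureHallCount n k r +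
        ∑ r ∈ Ico t (n + 1), antiLectureHallCount n (k + 1) r) := by
  set M := (n + 1) * k + t + 1 with hM
  calc antiLectureHallCount (n + 1) (k + 1) t
      = ∑ r ∈ Ico t (M + (n + 1)), antiLectureHallCount n (k + 1) r :=
        antiLectureHallCount_succ_eq_sum_Ico ht (by rw [hM]; linarith)
    _ = ∑ r ∈ Ico t (n + 1), antiLectureHallCount n (k + 1) r +
          ∑ s ∈ range M, antiLectureHallCount n k s := by
        rw [← Finset.sum_Ico_consecutive _ ht (Nat.le_add_left _ _),
          Finset.sum_Ico_eq_sum_range _ (n + 1)]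
        simp [add_comm (n + 1), antiLectureHallCount_add_add]
    _ = ∑ r ∈ Ico t (n + 1), antiLectureHallCount n (k + 1) r +
          (∑ r ∈ range t, antiLectureHallCount n k r + antiLectureHallCount (n + 1) k t) := by
        rw [antiLectureHallCount_succ_eq_sum_Ico ht (show (n + 1) * k < M by omega),
          Finset.sum_range_add_sum_Ico _ (by omega)]
    _ = _ := by ring

end Counting

section LatticePoints

lemma setOf_intCast_mem_smul_Qpoly_succ (N k : ℕ) :
    {x : Fin N → ℤ | (fun i => (x i : ℝ)) ∈ (k : ℝ) • Qpoly (N + 1)} =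
      (fun (T : Fin (N + 1) → ℕ) (i : Fin N) => (T i.succ : ℤ) - T i.castSucc) ''
        antiLectureHall N k := by
  ext x
  rw [Set.mem_ofPred_eq, mem_smul_Qpoly_succ_iff k.cast_nonneg]
  constructor
  · rintro ⟨hALH, hlast⟩
    have cast_eq (i : Fin (N + 1)) : (k : ℝ) + Fin.partialSum (fun i => (x i : ℝ)) i =
        ((k + Fin.partialSum x i : ℤ) : ℝ) := by
      refine const_add_partialSum_eq_iff
        (T := fun i => ((k + Fin.partialSum x i : ℤ) : ℝ)).2 ⟨by simp, fun i => ?_⟩ i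
      simp [Fin.partialSum_succ]
    have nonneg (i : Fin (N + 1)) : (0 : ℤ) ≤ k + Fin.partialSum x i := by
      rw [← Int.cast_nonneg_iff (R := ℝ), ← cast_eq]
      have h := (mul_nonneg (by positivity) hlast).trans (hALH.mul_le_mul (Fin.le_last i))
      exact nonneg_of_mul_nonneg_right h (by positivity)
    choose T hT using fun i => Int.eq_ofNat_of_zero_le (nonneg i)
    obtain ⟨h0, hx⟩ := const_add_partialSum_eq_iff.1 hT
    refine ⟨T, mem_antiLectureHall.2 ⟨by exact_mod_cast h0, ?_⟩, funext fun i => (hx i).symm⟩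
    rw [← isAntiLectureHall_natCast_iff (R := ℝ)]
    simpa only [cast_eq, hT, Int.cast_natCast] using hALH
  · rintro ⟨T, hT, rfl⟩
    obtain ⟨rfl, hALH⟩ := mem_antiLectureHall.1 hT
    have hsum : ∀ i, (T 0 : ℝ) + Fin.partialSum
        (fun i : Fin N => (((T i.succ : ℤ) - T i.castSucc : ℤ) : ℝ)) i = T i :=
      const_add_partialSum_eq_iff.2 ⟨rfl, fun i => by simp⟩
    simp only [hsum]
    exact ⟨isAntiLectureHall_natCast_iff.2 hALH, Nat.cast_nonneg _⟩

lemma latticeCount_succ (N k : ℕ) : latticeCount (N + 1) k = #(antiLectureHall N k) := by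
  have injOn : Set.InjOn (fun (T : Fin (N + 1) → ℕ) (i : Fin N) => (T i.succ : ℤ) - T i.castSucc)
      (antiLectureHall N k) := by
    intro T hT T' hT' (h : (fun i : Fin N => (T i.succ : ℤ) - T i.castSucc) = _)
    have h0 : T 0 = T' 0 :=
      (mem_antiLectureHall.1 hT).1.trans (mem_antiLectureHall.1 hT').1.symm
    ext i
    have recover (U : Fin (N + 1) → ℕ) :
        (U 0 : ℤ) + Fin.partialSum (fun i : Fin N => (U i.succ : ℤ) - U i.castSucc) i = U i :=
      const_add_partialSum_eq_iff (T := fun i => (U i : ℤ)).2 ⟨rfl, fun _ => rfl⟩ i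
    have hTT' : (T i : ℤ) = T' i := by rw [← recover T, h, h0, recover T']
    exact_mod_cast hTT'
  rw [← Set.ncard_coe_finset, ← injOn.ncard_image, ← setOf_intCast_mem_smul_Qpoly_succ]
  rfl

end LatticePoints

section Permutations

open Equiv

variable {n : ℕ}

/-- The permutation with first value `p` whose remaining values are in the same relative order
as those of `e`. -/
def consPerm (p : Fin (n + 1)) (e : Perm (Fin n)) : Perm (Fin (n + 1)) :=
  p.cycleRange.symm * Perm.decomposeFin.symm (0, e)

lemma consPerm_zero (p : Fin (n + 1)) (e : Perm (Fin n)) : consPerm p e 0 = p := by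
  simp [consPerm]

lemma consPerm_succ (p : Fin (n + 1)) (e : Perm (Fin n)) (i : Fin n) :
    consPerm p e i.succ = p.succAbove (e i) := by
  simp [consPerm]

lemma consPerm_bijective :
    Function.Bijective fun q : Fin (n + 1) × Perm (Fin n) => consPerm q.1 q.2 := by
  refine (Fintype.bijective_iff_injective_and_card _).2 ⟨?_, ?_⟩
  · rintro ⟨p, e⟩ ⟨q, f⟩ (h : consPerm p e = consPerm q f)
    obtain rfl : p = q := by rw [← consPerm_zero p e, h, consPerm_zero]
    have hef : e = f := Equiv.ext fun i => Fin.succAbove_right_injective (p := p) <| by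
      rw [← consPerm_succ, h, consPerm_succ]
    rw [hef]
  · simp [Fintype.card_perm, Nat.factorial_succ]

lemma sum_perm_filter_apply_zero_eq {M : Type*} [AddCommMonoid M] (f : Perm (Fin (n + 1)) → M)
    (p : Fin (n + 1)) :
    ∑ σ : Perm (Fin (n + 1)) with σ 0 = p, f σ = ∑ e : Perm (Fin n), f (consPerm p e) := by
  rw [Finset.sum_filter, ← consPerm_bijective.sum_comp, Fintype.sum_prod_type,
    Fintype.sum_eq_single p]
  · simp [consPerm_zero]
  · intro q hq
    simp [consPerm_zero, hq]

lemma descents_succ_eq_card (σ : Perm (Fin (n + 1))) :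
    descents (n + 1) σ = #{i : Fin n | σ i.succ < σ i.castSucc} := by
  refine (Finset.card_nbij (fun i : Fin n => (i.castSucc, i.succ)) ?_ ?_ ?_).symm
  · intro i hi
    simpa using hi
  · intro i _ j _ h
    exact Fin.castSucc_injective n (congrArg Prod.fst h)
  · rintro ⟨a, b⟩ hab
    obtain ⟨hb, hdesc⟩ := (Finset.mem_filter.1 hab).2
    obtain ⟨i, rfl⟩ : ∃ i : Fin n, i.castSucc = a :=
      ⟨⟨a, by have := b.is_lt; simp only at hb; omega⟩, rfl⟩
    obtain rfl : i.succ = b := Fin.ext hb.symm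
    exact ⟨i, by simpa using hdesc, rfl⟩

lemma descents_consPerm (p : Fin (n + 2)) (e : Perm (Fin (n + 1))) :
    descents (n + 2) (consPerm p e) =
      (if (e 0).castSucc < p then 1 else 0) + descents (n + 1) e := by
  simp only [descents_succ_eq_card]
  rw [Fin.card_filter_univ_succ']
  simp only [Fin.castSucc_zero, ← Fin.succ_castSucc, consPerm_zero, consPerm_succ,
    Fin.succAbove_lt_iff_castSucc_lt, Fin.succAbove_lt_succAbove_iff]

/-- The Eulerian polynomial of `S_{n+1}`, evaluated at `z` and restricted to the permutations
with first value `p`. -/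
def eulerianWithHead {S : Type*} [CommSemiring S] (z : S) (n : ℕ) (p : Fin (n + 1)) : S :=
  ∑ σ : Perm (Fin (n + 1)) with σ 0 = p, z ^ descents (n + 1) σ

variable {S : Type*} [CommSemiring S] (z : S)

lemma eulerianWithHead_zero (p : Fin 1) : eulerianWithHead z 0 p = 1 := by
  rw [eulerianWithHead, sum_perm_filter_apply_zero_eq]
  simp [descents_succ_eq_card]

lemma sum_eulerianWithHead (n : ℕ) :
    ∑ p, eulerianWithHead z n p = ∑ σ : Perm (Fin (n + 1)), z ^ descents (n + 1) σ :=
  Finset.sum_fiberwise _ _ _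

lemma eulerianWithHead_succ (n : ℕ) (p : Fin (n + 2)) :
    eulerianWithHead z (n + 1) p =
      ∑ r : Fin (n + 1), (if r.castSucc < p then z else 1) * eulerianWithHead z n r := by
  have fiber (r : Fin (n + 1)) : (if r.castSucc < p then z else 1) * eulerianWithHead z n r =
      ∑ e : Perm (Fin (n + 1)) with e 0 = r, z ^ descents (n + 2) (consPerm p e) := by
    rw [eulerianWithHead, Finset.mul_sum]
    refine Finset.sum_congr rfl fun e he => ?_
    rw [descents_consPerm, (Finset.mem_filter.1 he).2, pow_add]
    split_ifs <;> simp
  simp only [fiber, Finset.sum_fiberwise]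
  exact sum_perm_filter_apply_zero_eq _ p

end Permutations

section GeneratingFunctions

open PowerSeries

variable (R : Type*) [CommRing R]

/-- The generating function, in the first term `k`, of the number of anti-lecture hall sequences
`k = T 0, …, T n = t`. -/
noncomputable def antiLectureHallSeries (n t : ℕ) : R⟦X⟧ :=
  mk fun k => (antiLectureHallCount n k t : R)

lemma antiLectureHallSeries_zero : antiLectureHallSeries R 0 0 = 1 := by
  ext k
  simp [antiLectureHallSeries, antiLectureHallCount_zero_left, coeff_one]

lemma one_sub_X_mul_antiLectureHallSeries_succ {n t : ℕ} (ht : t ≤ n + 1) :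
    (1 - X) * antiLectureHallSeries R (n + 1) t =
      X * ∑ r ∈ range t, antiLectureHallSeries R n r +
        ∑ r ∈ Ico t (n + 1), antiLectureHallSeries R n r := by
  ext k
  rw [sub_mul, one_mul]
  cases k with
  | zero => simp [antiLectureHallSeries, antiLectureHallCount_succ_zero_left ht]
  | succ k =>
    simp [antiLectureHallSeries, antiLectureHallCount_succ_succ ht, coeff_succ_X_mul]

lemma sum_ite_castSucc_lt_mul {S : Type*} [Semiring S] {n : ℕ} (z : S) (f : ℕ → S)
    (p : Fin (n + 2)) :
    ∑ r : Fin (n + 1), (if r.castSucc < p then z else 1) * f r =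
      z * ∑ r ∈ range p, f r + ∑ r ∈ Ico ↑p (n + 1), f r := by
  simp only [Fin.lt_def, Fin.val_castSucc]
  rw [Fin.sum_univ_eq_sum_range (fun r => (if r < p then z else 1) * f r),
    ← Finset.sum_range_add_sum_Ico _ p.is_le, Finset.mul_sum]
  congr 1
  · exact Finset.sum_congr rfl fun r hr => by rw [if_pos (Finset.mem_range.1 hr)]
  · exact Finset.sum_congr rfl fun r hr => by
      rw [if_neg (Finset.mem_Ico.1 hr).1.not_gt, one_mul]

lemma one_sub_X_pow_mul_antiLectureHallSeries (n : ℕ) (p : Fin (n + 1)) :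
    (1 - X) ^ n * antiLectureHallSeries R n p = eulerianWithHead (X : R⟦X⟧) n p := by
  induction n with
  | zero => simp [eulerianWithHead_zero, antiLectureHallSeries_zero]
  | succ n ih =>
    rw [pow_succ, mul_assoc, one_sub_X_mul_antiLectureHallSeries_succ R p.is_le,
      ← sum_ite_castSucc_lt_mul, Finset.mul_sum, eulerianWithHead_succ]
    refine Finset.sum_congr rfl fun r _ => ?_
    rw [← ih, mul_left_comm]

end GeneratingFunctions

theorem stmt_9_general (R : Type*) [CommRing R] {n : ℕ} (hn : n ≠ 0) :
    (1 - PowerSeries.X : PowerSeries R) ^ n * PowerSeries.mk (fun k => (latticeCount n k : R)) =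
      ∑ σ : Equiv.Perm (Fin n), (PowerSeries.X : PowerSeries R) ^ descents n σ := by
  obtain ⟨N, rfl⟩ := Nat.exists_eq_succ_of_ne_zero hn
  have series_eq : PowerSeries.mk (fun k => (latticeCount (N + 1) k : R)) =
      antiLectureHallSeries R (N + 1) 0 := by
    simp only [latticeCount_succ, antiLectureHallSeries, antiLectureHallCount_succ_zero]
  calc (1 - PowerSeries.X) ^ (N + 1) * PowerSeries.mk (fun k => (latticeCount (N + 1) k : R))
      = (1 - PowerSeries.X) ^ (N + 1) * antiLectureHallSeries R (N + 1) 0 := by rw [series_eq]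
    _ = eulerianWithHead PowerSeries.X (N + 1) 0 :=
        one_sub_X_pow_mul_antiLectureHallSeries R (N + 1) 0
    _ = ∑ p, eulerianWithHead PowerSeries.X N p := by simp [eulerianWithHead_succ]
    _ = ∑ σ : Equiv.Perm (Fin (N + 1)), PowerSeries.X ^ descents (N + 1) σ :=
        sum_eulerianWithHead _ N

/-- For every integer `n ≥ 2`, the `δ`-polynomial of `Q_n` equals the
`n`-th Eulerian polynomial `A_n(z) = ∑_{σ ∈ S_n} z^{des σ}`: as formal power series,
`(1 - z)^n · ∑_{k ≥ 0} #(kQ_n ∩ ℤ^{n-1}) z^k = ∑_{σ ∈ S_n} z^{des σ}`. -/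
theorem stmt_9 (n : ℕ) (hn : 2 ≤ n) :
    (1 - PowerSeries.X : PowerSeries ℚ) ^ n *
        PowerSeries.mk (fun k => (latticeCount n k : ℚ)) =
      ∑ σ : Equiv.Perm (Fin n), (PowerSeries.X : PowerSeries ℚ) ^ descents n σ := by
  exact stmt_9_general ℚ (by omega)
end
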